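/- Let k ≥ 1, α ∈ ℝ^k with α_i > 0, α_0 := Σ_i α_i, and let n_1, …, n_k be nonnegative integers with n := Σ_i n_i. Then ∫_{T_k} (∏_{i=1}^k x̄_i^{n_i}) w_α(x) dx = [ (∏_{i=1}^k ∏_{m=0}^{n_i−1} (α_i + m)) / (∏_{m=0}^{n−1} (α_0 + m)) ] · ∫_{T_k} w_α(x) dx. In other words, the Dirichlet(α) mixed moment E_α[∏_i x̄_i^{n_i}] equals ∏_i (α_i)^{(n_i)} / (α_0)^{(n)}, where (a)^{(m)} denotes the rising factorial a(a+1)⋯(a+m−1). -/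

import Mathlib

/-! The proof evaluates both sides through the Dirichlet integral
`∫_{T_k} ∏ x̄_i^{α_i - 1} dx = ∏ Γ(α_i) / Γ(α_0)` (`integral_dirW`).

Write `g_a(t) = t^{a-1}` for `t ≥ 0` and `g_a(t) = 0` for `t < 0`. The Beta integral says that these
functions form a convolution semigroup up to constants: `g_a ⋆ g_b = Γ(a)Γ(b)/Γ(a+b) · g_{a+b}` away
from `0` (`lintegral_powDensity_conv`). The integral of the Dirichlet weight over the simplex is the
iterated convolution `g_{α_1} ⋆ ⋯ ⋆ g_{α_k}` at the point `1`, so induction on the number of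
variables and Tonelli's theorem give the Dirichlet integral (`lintegral_dirichlet`). Working with
lower Lebesgue integrals makes integrability questions disappear.

On the simplex, multiplying the weight `w_α` by `∏ x̄_i^{n_i}` yields the weight `w_{α+n}`, and
`Γ(a + m) = (a)^{(m)} Γ(a)` turns the quotient of the two Dirichlet integrals into the stated
quotient of rising factorials.
-/

open MeasureTheory

noncomputable section

/-- The simplex `T_k ⊆ ℝ^{k-1}`: nonnegative coordinates summing to at most 1. -/
def Tset (k : ℕ) : Set (Fin (k - 1) → ℝ) :=
  {x | (∀ i, 0 ≤ x i) ∧ ∑ i, x i ≤ 1}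

/-- The completed vector `x̄ ∈ ℝ^k`: first `k-1` coordinates are those of `x`,
the last coordinate is `1 - Σ x_i`. -/
def bar (k : ℕ) (x : Fin (k - 1) → ℝ) : Fin k → ℝ :=
  fun i => if h : (i : ℕ) < k - 1 then x ⟨i, h⟩ else 1 - ∑ j, x j

/-- The Dirichlet weight `w_α(x) = ∏ x̄_i^{α_i - 1}`. -/
def dirW (k : ℕ) (α : Fin k → ℝ) (x : Fin (k - 1) → ℝ) : ℝ :=
  ∏ i, bar k x i ^ (α i - 1)

open scoped ENNReal

/-- The power density `t ↦ t^{a-1}` on `[0, ∞)`, extended by zero to the negative reals. -/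
def powDensity (a t : ℝ) : ℝ≥0∞ := if 0 ≤ t then ENNReal.ofReal (t ^ (a - 1)) else 0

lemma measurable_powDensity (a : ℝ) : Measurable (powDensity a) :=
  Measurable.ite measurableSet_Ici (by fun_prop) (by fun_prop)

lemma powDensity_of_nonneg {a t : ℝ} (ht : 0 ≤ t) :
    powDensity a t = ENNReal.ofReal (t ^ (a - 1)) := if_pos ht

lemma powDensity_of_neg {a t : ℝ} (ht : t < 0) : powDensity a t = 0 := if_neg ht.not_ge

/-- The Beta integral as a convolution identity. The point `s = 0` has to be excluded: there the
left side vanishes, while `powDensity 1 0 = 1`. -/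
lemma lintegral_powDensity_conv {a b s : ℝ} (ha : 0 < a) (hb : 0 < b) (hs : s ≠ 0) :
    ∫⁻ t, powDensity a t * powDensity b (s - t) =
      ENNReal.ofReal (ProbabilityTheory.beta a b) * powDensity (a + b) s := by
  rcases lt_or_gt_of_ne hs with hs | hs
  · rw [powDensity_of_neg hs, mul_zero]
    have : ∀ t, powDensity a t * powDensity b (s - t) = 0 := fun t => by
      rcases lt_or_ge t 0 with ht | ht
      · rw [powDensity_of_neg ht, zero_mul]
      · rw [powDensity_of_neg (by linarith : s - t < 0), mul_zero]
    simp [this]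
  · have hB := ProbabilityTheory.beta_pos ha hb
    have hm : Measurable fun t => powDensity a t * powDensity b (s - t) :=
      (measurable_powDensity a).mul ((measurable_powDensity b).comp (by fun_prop))
    -- substitute `t = s u` to reduce to the Beta density on `(0, 1)`
    rw [← Real.smul_map_volume_mul_left hs.ne', lintegral_smul_measure,
      lintegral_map hm (by fun_prop)]
    have key : ∀ᵐ u : ℝ, powDensity a (s * u) * powDensity b (s - s * u) =
        ENNReal.ofReal (s ^ (a - 1) * s ^ (b - 1) * ProbabilityTheory.beta a b) *
          ProbabilityTheory.betaPDF a b u := by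
      filter_upwards [Measure.ae_ne volume (0 : ℝ), Measure.ae_ne volume (1 : ℝ)] with u h0 h1
      rcases lt_or_gt_of_ne h0 with h0 | h0
      · rw [powDensity_of_neg (mul_neg_of_pos_of_neg hs h0),
          ProbabilityTheory.betaPDF_eq_zero_of_nonpos h0.le]
        simp
      rcases lt_or_gt_of_ne h1 with h1 | h1
      · have e : s - s * u = s * (1 - u) := by ring
        have h1' : 0 < 1 - u := by linarith
        rw [e, powDensity_of_nonneg (by positivity), powDensity_of_nonneg (by positivity),
          ProbabilityTheory.betaPDF_of_pos_lt_one h0 h1, ← ENNReal.ofReal_mul (by positivity),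
          ← ENNReal.ofReal_mul (by positivity), Real.mul_rpow hs.le h0.le,
          Real.mul_rpow hs.le h1'.le]
        congr 1
        field_simp
      · rw [powDensity_of_neg (by nlinarith : s - s * u < 0),
          ProbabilityTheory.betaPDF_eq_zero_of_one_le h1.le]
        simp
    have hpdf : Measurable (ProbabilityTheory.betaPDF a b) :=
      (ProbabilityTheory.measurable_betaPDFReal a b).ennreal_ofReal
    rw [lintegral_congr_ae key, lintegral_const_mul _ hpdf,
      ProbabilityTheory.lintegral_betaPDF_eq_one ha hb, powDensity_of_nonneg hs.le, mul_one,
      abs_of_pos hs, smul_eq_mul, ← ENNReal.ofReal_mul hs.le, ← ENNReal.ofReal_mul hB.le]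
    congr 1
    have : s ^ (a + b - 1) = s * (s ^ (a - 1) * s ^ (b - 1)) := by
      rw [show a + b - 1 = 1 + ((a - 1) + (b - 1)) by ring, Real.rpow_add hs, Real.rpow_one,
        Real.rpow_add hs]
    rw [this]
    ring

/-- The Dirichlet integral over the simplex of size `s`, as an iterated convolution. -/
lemma lintegral_dirichlet (m : ℕ) (a : Fin m → ℝ) (ha : ∀ i, 0 < a i) {b : ℝ} (hb : 0 < b)
    {s : ℝ} (hs : s ≠ 0) :
    ∫⁻ y : Fin m → ℝ, (∏ i, powDensity (a i) (y i)) * powDensity b (s - ∑ i, y i) =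
      ENNReal.ofReal ((∏ i, Real.Gamma (a i)) * Real.Gamma b / Real.Gamma (∑ i, a i + b)) *
        powDensity (∑ i, a i + b) s := by
  induction m generalizing s with
  | zero =>
    rw [lintegral_unique]
    simp [(Real.Gamma_pos_of_pos hb).ne', volume_pi]
  | succ m ih =>
    have hA : 0 < ∑ i : Fin m, a i.succ + b :=
      add_pos_of_nonneg_of_pos (Finset.sum_nonneg fun i _ => (ha _).le) hb
    have hm : Measurable fun y : Fin (m + 1) → ℝ =>
        (∏ i, powDensity (a i) (y i)) * powDensity b (s - ∑ i, y i) :=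
      (Finset.measurable_prod _ fun i _ =>
        (measurable_powDensity _).comp (measurable_pi_apply i)).mul
        ((measurable_powDensity b).comp (by fun_prop))
    have hm' : ∀ t : ℝ, Measurable fun y : Fin m → ℝ =>
        (∏ i, powDensity (a i.succ) (y i)) * powDensity b (s - t - ∑ i, y i) := fun t =>
      (Finset.measurable_prod _ fun i _ =>
        (measurable_powDensity _).comp (measurable_pi_apply i)).mul
        ((measurable_powDensity b).comp (by fun_prop))
    have hmp := (volume_preserving_piFinSuccAbove (fun _ : Fin (m + 1) => ℝ) 0).symm
    rw [← hmp.lintegral_comp hm, Measure.volume_eq_prod,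
      lintegral_prod _ (by exact (hm.comp (MeasurableEquiv.measurable _)).aemeasurable)]
    have inner : ∀ᵐ t : ℝ, ∫⁻ y : Fin m → ℝ,
        (∏ i, powDensity (a i)
          ((MeasurableEquiv.piFinSuccAbove (fun _ : Fin (m + 1) => ℝ) 0).symm (t, y) i)) *
        powDensity b (s - ∑ i,
          (MeasurableEquiv.piFinSuccAbove (fun _ : Fin (m + 1) => ℝ) 0).symm (t, y) i) =
        ENNReal.ofReal ((∏ i : Fin m, Real.Gamma (a i.succ)) * Real.Gamma b /
          Real.Gamma (∑ i : Fin m, a i.succ + b)) *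
        (powDensity (a 0) t * powDensity (∑ i : Fin m, a i.succ + b) (s - t)) := by
      filter_upwards [Measure.ae_ne volume s] with t ht
      rw [mul_left_comm, ← ih (fun i => a i.succ) (fun i => ha _) (sub_ne_zero.2 ht.symm),
        ← lintegral_const_mul _ (hm' t)]
      refine lintegral_congr fun y => ?_
      simp [MeasurableEquiv.piFinSuccAbove_symm_apply, Fin.insertNthEquiv, Fin.prod_univ_succ,
        Fin.sum_univ_succ, mul_assoc, sub_sub]
    have hconv : Measurable fun t : ℝ =>
        powDensity (a 0) t * powDensity (∑ i : Fin m, a i.succ + b) (s - t) :=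
      (measurable_powDensity _).mul ((measurable_powDensity _).comp (measurable_id.const_sub s))
    rw [lintegral_congr_ae inner, lintegral_const_mul _ hconv,
      lintegral_powDensity_conv (ha 0) hA hs,
      ← mul_assoc, Fin.sum_univ_succ, ← add_assoc]
    have hG : 0 < ∏ i : Fin m, Real.Gamma (a i.succ) :=
      Finset.prod_pos fun i _ => Real.Gamma_pos_of_pos (ha _)
    have hGb := Real.Gamma_pos_of_pos hb
    have hGA := Real.Gamma_pos_of_pos hA
    rw [← ENNReal.ofReal_mul (by positivity), ProbabilityTheory.beta, Fin.prod_univ_succ,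
      ← add_assoc]
    congr 2
    field_simp

lemma measurableSet_Tset (k : ℕ) : MeasurableSet (Tset k) := by
  have : Tset k = (⋂ i, {x | 0 ≤ x i}) ∩ {x | ∑ i, x i ≤ 1} := by
    ext x; simp [Tset]
  rw [this]
  exact (MeasurableSet.iInter fun i => measurableSet_le measurable_const (by fun_prop)).inter
    (measurableSet_le (by fun_prop) measurable_const)

lemma bar_castSucc (m : ℕ) (x : Fin m → ℝ) (i : Fin m) : bar (m + 1) x i.castSucc = x i := by
  simp [bar]

lemma bar_last (m : ℕ) (x : Fin m → ℝ) : bar (m + 1) x (Fin.last m) = 1 - ∑ i, x i := by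
  simp [bar]

lemma bar_nonneg {k : ℕ} {x : Fin (k - 1) → ℝ} (hx : x ∈ Tset k) (i : Fin k) :
    0 ≤ bar k x i := by
  unfold bar
  split_ifs with h
  · exact hx.1 _
  · linarith [hx.2]

lemma measurable_dirW (k : ℕ) (α : Fin k → ℝ) : Measurable (dirW k α) := by
  unfold dirW
  refine Finset.measurable_prod _ fun i _ => Measurable.pow_const ?_ _
  unfold bar
  split_ifs <;> fun_prop

/-- The Dirichlet integral. -/
lemma integral_dirW {k : ℕ} (hk : 1 ≤ k) (α : Fin k → ℝ) (hα : ∀ i, 0 < α i) :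
    ∫ x in Tset k, dirW k α x = (∏ i, Real.Gamma (α i)) / Real.Gamma (∑ i, α i) := by
  obtain ⟨m, rfl⟩ : ∃ m, k = m + 1 := ⟨k - 1, by omega⟩
  have hT := measurableSet_Tset (m + 1)
  have hnn : 0 ≤ᵐ[volume.restrict (Tset (m + 1))] dirW (m + 1) α :=
    ae_restrict_of_forall_mem hT fun x hx =>
      Finset.prod_nonneg fun i _ => Real.rpow_nonneg (bar_nonneg hx i) _
  rw [integral_eq_lintegral_of_nonneg_ae hnn
    (measurable_dirW _ _).aestronglyMeasurable, ← lintegral_indicator hT]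
  have key : ∀ x : Fin m → ℝ,
      (Tset (m + 1)).indicator (fun x => ENNReal.ofReal (dirW (m + 1) α x)) x =
      (∏ i : Fin m, powDensity (α i.castSucc) (x i)) *
        powDensity (α (Fin.last m)) (1 - ∑ i, x i) := by
    intro x
    by_cases hx : x ∈ Tset (m + 1)
    · have hx1 : ∀ i : Fin m, 0 ≤ x i := hx.1
      have hx2 : ∑ i : Fin m, x i ≤ 1 := hx.2
      rw [Set.indicator_of_mem hx, dirW, Fin.prod_univ_castSucc, bar_last,
        powDensity_of_nonneg (by linarith), ENNReal.ofReal_mul', ENNReal.ofReal_prod_of_nonneg]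
      · congr 1
        refine Finset.prod_congr rfl fun i _ => ?_
        rw [bar_castSucc, powDensity_of_nonneg (hx1 i)]
      · exact fun i _ => Real.rpow_nonneg (bar_nonneg hx _) _
      · exact Real.rpow_nonneg (by linarith) _
    · rw [Set.indicator_of_notMem hx]
      by_cases h1 : ∀ i : Fin m, 0 ≤ x i
      · have h2 : ¬ ∑ i : Fin m, x i ≤ 1 := fun h => hx ⟨h1, h⟩
        rw [powDensity_of_neg (by linarith), mul_zero]
      · push Not at h1
        obtain ⟨i, hi⟩ := h1
        rw [Finset.prod_eq_zero (Finset.mem_univ i) (powDensity_of_neg hi), zero_mul]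
  have hGpos : ∀ i, 0 < Real.Gamma (α i) := fun i => Real.Gamma_pos_of_pos (hα i)
  have hS : 0 < ∑ i, α i := Finset.sum_pos (fun i _ => hα i) Finset.univ_nonempty
  calc _ = (∫⁻ x : Fin m → ℝ, (∏ i : Fin m, powDensity (α i.castSucc) (x i)) *
        powDensity (α (Fin.last m)) (1 - ∑ i, x i)).toReal :=
        congrArg ENNReal.toReal (lintegral_congr key)
    _ = _ := by
      rw [lintegral_dirichlet m _ (fun i => hα _) (hα _) one_ne_zero, ← Fin.sum_univ_castSucc,
        ← Fin.prod_univ_castSucc (fun i => Real.Gamma (α i)), powDensity_of_nonneg zero_le_one,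
        Real.one_rpow, ENNReal.ofReal_one, mul_one, ENNReal.toReal_ofReal]
      exact div_nonneg (Finset.prod_nonneg fun i _ => (hGpos i).le) (Real.Gamma_pos_of_pos hS).le

lemma gamma_add_nat {a : ℝ} (ha : 0 < a) (m : ℕ) :
    Real.Gamma (a + m) = (∏ j ∈ Finset.range m, (a + (j : ℝ))) * Real.Gamma a := by
  induction m with
  | zero => simp
  | succ m ih =>
    rw [Finset.prod_range_succ, Nat.cast_succ, ← add_assoc,
      Real.Gamma_add_one (by positivity), ih]
    ring

/-- This holds at `t = 0` too: for `m ≥ 1` both sides vanish, because `a + m - 1 > 0`. -/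
lemma pow_mul_rpow_sub_one {a t : ℝ} (ha : 0 < a) (ht : 0 ≤ t) (m : ℕ) :
    t ^ m * t ^ (a - 1) = t ^ (a + m - 1) := by
  rcases Nat.eq_zero_or_pos m with rfl | hm
  · simp
  · have hm' : (1 : ℝ) ≤ m := by exact_mod_cast hm
    rw [← Real.rpow_natCast, ← Real.rpow_add' ht (by linarith)]
    congr 1
    ring

/-- Dirichlet mixed moments: `E_α[∏ x̄_i^{n_i}] = ∏_i (α_i)^{(n_i)} / (α_0)^{(n)}`
where `(a)^{(m)}` is the rising factorial, stated as an identity between integrals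
against the Dirichlet weight. -/
theorem dirichlet_mixed_moments (k : ℕ) (hk : 1 ≤ k) (α : Fin k → ℝ)
    (hα : ∀ i, 0 < α i) (n : Fin k → ℕ) :
    ∫ x in Tset k, (∏ i, bar k x i ^ (n i)) * dirW k α x =
      ((∏ i, ∏ m ∈ Finset.range (n i), (α i + (m : ℝ))) /
          ∏ m ∈ Finset.range (∑ i, n i), ((∑ i, α i) + (m : ℝ))) *
        ∫ x in Tset k, dirW k α x := by
  have hS : 0 < ∑ i, α i :=
    Finset.sum_pos (fun i _ => hα i) ⟨⟨0, hk⟩, Finset.mem_univ _⟩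
  have h1 : ∫ x in Tset k, (∏ i, bar k x i ^ (n i)) * dirW k α x =
      ∫ x in Tset k, dirW k (fun i => α i + n i) x := by
    refine setIntegral_congr_fun (measurableSet_Tset k) fun x hx => ?_
    simp only [dirW, ← Finset.prod_mul_distrib]
    exact Finset.prod_congr rfl fun i _ => pow_mul_rpow_sub_one (hα i) (bar_nonneg hx i) _
  have h2 : ∑ i, (α i + (n i : ℝ)) = ∑ i, α i + ((∑ i, n i : ℕ) : ℝ) := by
    rw [Finset.sum_add_distrib, Nat.cast_sum]
  rw [h1, integral_dirW hk _ (fun i => add_pos_of_pos_of_nonneg (hα i) (Nat.cast_nonneg _)),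
    integral_dirW hk α hα, h2, gamma_add_nat hS,
    Finset.prod_congr rfl fun i _ => gamma_add_nat (hα i) (n i), Finset.prod_mul_distrib,
    mul_div_mul_comm]
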